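/- arXiv:2002.10166 — 12 statements merged into one kernel-verified Lean document; each statement's English description precedes it below -/
import Mathlib

section
/- Let X be a real vector space and f an asymmetric norm on X. Equip X with the topology τ_f generated by the forward balls {y : f (y - x) < ε} for x ∈ X and ε > 0. Then (X, τ_f) is a T1 topological space if and only if every x ∈ X with f x = 1 satisfies f (-x) ≠ 0. -/
/-!
If `f (-x) = 0`, the triangle inequality shows that every forward ball containing `0` contains `-x`,
hence so does every open set containing `0` (`mem_of_isOpen_of_eq_zero`, stated at a general base
point), and T1 forces `x = 0`. Conversely, for `x ≠ y` the ball around `x` of radius `f (y - x)`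
separates `x` from `y` as soon as `f (y - x) > 0`. If `f (y - x) = 0`, then `f (x - y) > 0` by
definiteness, and rescaling `x - y` yields a unit vector `z` with `f (-z) = 0`.
-/

/-- `f` is an asymmetric norm on the real vector space `X`. -/
def IsAsymmNorm {X : Type*} [AddCommGroup X] [Module ℝ X] (f : X → ℝ) : Prop :=
  (∀ x, 0 ≤ f x) ∧ (∀ (c : ℝ), 0 ≤ c → ∀ x, f (c • x) = c * f x) ∧
  (∀ x y, f (x + y) ≤ f x + f y) ∧ (∀ x, f x = 0 → f (-x) = 0 → x = 0)

/-- The topology on `X` generated by the forward balls of the asymmetric norm `f`. -/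
def asymmTopology {X : Type*} [AddCommGroup X] [Module ℝ X] (f : X → ℝ) :
    TopologicalSpace X :=
  TopologicalSpace.generateFrom
    {S | ∃ (x : X) (ε : ℝ), 0 < ε ∧ S = {y | f (y - x) < ε}}

/-- Translating by a vector on which `f` vanishes keeps a point inside each of its open
neighbourhoods. -/
theorem mem_of_isOpen_of_eq_zero {X : Type*} [AddCommGroup X] [Module ℝ X]
    {f : X → ℝ} (hf : IsAsymmNorm f) {v : X} (hv : f v = 0) {a : X} {U : Set X}
    (hU : @IsOpen X (asymmTopology f) U) (ha : a ∈ U) : a + v ∈ U := by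
  obtain ⟨-, -, hadd, -⟩ := hf
  induction hU with
  | basic S hS =>
    obtain ⟨x, ε, -, rfl⟩ := hS
    have h := hadd (a - x) v
    have ha' : f (a - x) < ε := ha
    have e : a + v - x = a - x + v := by abel
    change f (a + v - x) < ε
    rw [e]
    linarith
  | univ => trivial
  | inter S T _ _ ihS ihT => exact ⟨ihS ha.1, ihT ha.2⟩
  | sUnion 𝒮 _ ih =>
    obtain ⟨S, hS, haS⟩ := ha
    exact ⟨S, hS, ih S hS haS⟩

/-- `(X, τ_f)` is T1 iff every `x` with `f x = 1` satisfies `f (-x) ≠ 0`. -/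
theorem t1_iff_unit_sphere {X : Type*} [AddCommGroup X] [Module ℝ X]
    (f : X → ℝ) (hf : IsAsymmNorm f) :
    @T1Space X (asymmTopology f) ↔ ∀ x : X, f x = 1 → f (-x) ≠ 0 := by
  have hzero : f 0 = 0 := by
    simpa using hf.2.1 0 le_rfl 0
  let _ : TopologicalSpace X := asymmTopology f
  rw [t1Space_iff_exists_open]
  constructor
  · intro h x hx hneg
    have hx0 : (0 : X) ≠ -x := by
      intro h0
      rw [zero_eq_neg.mp h0, hzero] at hx
      exact zero_ne_one hx
    obtain ⟨U, hU, h0, hxU⟩ := h hx0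
    exact hxU (by simpa using mem_of_isOpen_of_eq_zero hf hneg hU h0)
  · obtain ⟨hnn, hsmul, -, hdef⟩ := hf
    intro h x y hxy
    have hpos : 0 < f (y - x) := by
      refine lt_of_le_of_ne (hnn _) fun hyx => ?_
      have hne : f (x - y) ≠ 0 := fun hxy0 =>
        hxy (sub_eq_zero.mp (hdef _ hxy0 (by rw [neg_sub, ← hyx])))
      have hinv : 0 ≤ (f (x - y))⁻¹ := inv_nonneg.mpr (hnn _)
      refine h ((f (x - y))⁻¹ • (x - y)) ?_ ?_
      · rw [hsmul _ hinv, inv_mul_cancel₀ hne]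
      · rw [← smul_neg, neg_sub, hsmul _ hinv, ← hyx, mul_zero]
    refine ⟨{z | f (z - x) < f (y - x)},
      TopologicalSpace.isOpen_generateFrom_of_mem ⟨x, _, hpos, rfl⟩, ?_, ?_⟩
    · simpa [hzero] using hpos
    · simp
end

section
/- Let X be a nontrivial real vector space and f an asymmetric norm on X with c(X) := sInf {f (-x) : x ∈ X, f x = 1} > 0. Then sSup {f (-x) : x ∈ X, f x = 1} * sInf {f (-x) : x ∈ X, f x = 1} = 1; in particular sSup {f (-x) : x ∈ X, f x = 1} = 1 / c(X). -/
/-- If `c(X) > 0`, then `sSup {f (-x) : f x = 1} * sInf {f (-x) : f x = 1} = 1`;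
in particular the sup is `1 / c(X)`. -/
theorem sSup_mul_sInf_eq_one {X : Type*} [AddCommGroup X] [Module ℝ X] [Nontrivial X]
    (f : X → ℝ) (hf : IsAsymmNorm f)
    (hc : 0 < sInf ((fun x => f (-x)) '' {x | f x = 1})) :
    sSup ((fun x => f (-x)) '' {x | f x = 1}) *
      sInf ((fun x => f (-x)) '' {x | f x = 1}) = 1 ∧
    sSup ((fun x => f (-x)) '' {x | f x = 1}) =
      1 / sInf ((fun x => f (-x)) '' {x | f x = 1}) := by
  obtain ⟨-, hsmul, -, -⟩ := hf
  set S : Set ℝ := (fun x => f (-x)) '' {x | f x = 1} with hS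
  -- `sInf ∅ = 0` in `ℝ`, so positivity of the infimum rules out `S = ∅`.
  have hne : S.Nonempty := by
    by_contra h
    rw [Set.not_nonempty_iff_eq_empty] at h
    rw [h, Real.sInf_empty] at hc
    exact lt_irrefl _ hc
  -- Likewise the infimum of a set unbounded below is `0`.
  have hbdd : BddBelow S := by
    by_contra h
    rw [Real.sInf_of_not_bddBelow h] at hc
    exact lt_irrefl _ hc
  have hle : ∀ a ∈ S, sInf S ≤ a := fun a ha => csInf_le hbdd ha
  have hpos : ∀ a ∈ S, 0 < a := fun a ha => hc.trans_le (hle a ha)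
  have hinv : ∀ a ∈ S, a⁻¹ ∈ S := by
    intro a ha
    have ha0 := hpos a ha
    obtain ⟨x, hx, rfl⟩ := ha
    have hx1 : f x = 1 := hx
    have ha0' : 0 < f (-x) := ha0
    refine ⟨(f (-x))⁻¹ • (-x), ?_, ?_⟩
    · change f ((f (-x))⁻¹ • (-x)) = 1
      rw [hsmul _ (inv_nonneg.2 ha0'.le), inv_mul_cancel₀ ha0'.ne']
    · change f (-((f (-x))⁻¹ • (-x))) = (f (-x))⁻¹
      rw [← smul_neg, neg_neg, hsmul _ (inv_nonneg.2 ha0'.le), hx1, mul_one]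
  have hlub : IsLUB S (sInf S)⁻¹ := by
    refine ⟨fun a ha => ?_, fun b hb => ?_⟩
    · exact (le_inv_comm₀ hc (hpos a ha)).1 (hle _ (hinv a ha))
    · obtain ⟨a₀, ha₀⟩ := hne
      have hb0 : 0 < b := (hpos a₀ ha₀).trans_le (hb ha₀)
      exact (inv_le_comm₀ hb0 hc).1 (le_csInf ⟨a₀, ha₀⟩ fun a ha =>
        (inv_le_comm₀ (hpos a ha) hb0).1 (hb (hinv a ha)))
  have hsup : sSup S = (sInf S)⁻¹ := hlub.csSup_eq hne
  exact ⟨by rw [hsup, inv_mul_cancel₀ hc.ne'], by rw [hsup, one_div]⟩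
end

section
/- Let X be a nontrivial real vector space and f an asymmetric norm on X with c(X) := sInf {f (-x) : x ∈ X, f x = 1} > 0. Then for every x ∈ X, c(X) * max (f x) (f (-x)) ≤ f x ≤ max (f x) (f (-x)); that is, c(X) * ‖x‖_s ≤ f x ≤ ‖x‖_s where ‖x‖_s is the associated norm. -/
/-- The index of symmetry, defined on the vectors with `f x = 1`, controls `f (-y)` for all `y` by
homogeneity; when `f y = 0` there is nothing to rescale and the bound is `0 ≤ f (-y)`. -/
lemma index_mul_le_neg {X : Type*} [AddCommGroup X] [Module ℝ X]
    {f : X → ℝ} (hf : IsAsymmNorm f) (y : X) :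
    sInf ((fun x => f (-x)) '' {x | f x = 1}) * f y ≤ f (-y) := by
  obtain ⟨hnonneg, hsmul, -, -⟩ := hf
  rcases (hnonneg y).eq_or_lt with h | h
  · rw [← h, mul_zero]
    exact hnonneg _
  · have hinv : 0 ≤ (f y)⁻¹ := inv_nonneg.2 h.le
    have hle : sInf ((fun x => f (-x)) '' {x | f x = 1}) ≤ (f y)⁻¹ * f (-y) := by
      refine csInf_le ⟨0, ?_⟩ ⟨(f y)⁻¹ • y, ?_, ?_⟩
      · rintro _ ⟨z, -, rfl⟩
        exact hnonneg _
      · change f ((f y)⁻¹ • y) = 1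
        rw [hsmul _ hinv, inv_mul_cancel₀ h.ne']
      · change f (-((f y)⁻¹ • y)) = _
        rw [← smul_neg, hsmul _ hinv]
    rwa [inv_mul_eq_div, le_div_iff₀ h] at hle

/-- If `c(X) > 0`, then `c(X) * ‖x‖ₛ ≤ f x ≤ ‖x‖ₛ` where `‖x‖ₛ = max (f x) (f (-x))`
is the associated norm. -/
theorem index_vs_symmetrized_norm {X : Type*} [AddCommGroup X] [Module ℝ X] [Nontrivial X]
    (f : X → ℝ) (hf : IsAsymmNorm f)
    (hc : 0 < sInf ((fun x => f (-x)) '' {x | f x = 1})) :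
    ∀ x : X,
      sInf ((fun x => f (-x)) '' {x | f x = 1}) * max (f x) (f (-x)) ≤ f x ∧
      f x ≤ max (f x) (f (-x)) := by
  intro x
  refine ⟨?_, le_max_left _ _⟩
  have h₁ := index_mul_le_neg hf x
  have h₂ := index_mul_le_neg hf (-x)
  rw [neg_neg] at h₂
  have hx := hf.1 x
  set c := sInf ((fun x => f (-x)) '' {x | f x = 1})
  rw [mul_max_of_nonneg _ _ hc.le]
  refine max_le ?_ h₂
  by_contra! hlt
  have hsq : c * (c * f x) ≤ f x := (mul_le_mul_of_nonneg_left h₁ hc.le).trans h₂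
  -- `f x < c * f x` with `f x ≥ 0` forces `c > 1`, whence `c * f x ≤ c * (c * f x)`.
  have hc1 : 1 < c := by nlinarith
  nlinarith
end

section
/- Let (X, f) and (Y, g) be asymmetric normed spaces, each carrying the real normed space structure of its associated norm, with X nontrivial and c(X) := sInf {f (-x) : x ∈ X, f x = 1} > 0. Let T : X →L[ℝ] Y be a continuous linear map belonging to L_c(X, Y). Then -T belongs to L_c(X, Y), and writing ‖T|_{L_c} := sSup {g (T x) : f x ≤ 1}: c(X) * ‖T|_{L_c} ≤ ‖-T|_{L_c} ≤ (1 / c(X)) * ‖T|_{L_c}, and ‖T‖ ≤ ‖T|_{L_c} ≤ (1 / c(X)) * ‖T‖, where ‖T‖ is the operator norm for the associated norms. -/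
/-- The index of symmetry `c(X)` of `f`. -/
noncomputable abbrev symmIndex {X : Type*} [AddCommGroup X] (f : X → ℝ) : ℝ :=
  sInf ((fun x => f (-x)) '' {x | f x = 1})

theorem index_mul_le {X : Type*} [AddCommGroup X] [Module ℝ X] {f : X → ℝ}
    (hf : IsAsymmNorm f) (x : X) : symmIndex f * f x ≤ f (-x) := by
  obtain ⟨h0, hs, -, -⟩ := hf
  rcases (h0 x).eq_or_lt with h | h
  · rw [← h, mul_zero]
    exact h0 _
  · have hmem : f (-((f x)⁻¹ • x)) ∈ (fun x => f (-x)) '' {x | f x = 1} :=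
      ⟨(f x)⁻¹ • x, by simp [hs _ (inv_nonneg.2 h.le), h.ne'], rfl⟩
    have hle : symmIndex f ≤ f (-((f x)⁻¹ • x)) :=
      csInf_le ⟨0, by rintro _ ⟨y, -, rfl⟩; exact h0 _⟩ hmem
    rw [← smul_neg, hs _ (inv_nonneg.2 h.le), inv_mul_eq_div] at hle
    exact (le_div_iff₀ h).1 hle

theorem index_le_one {X : Type*} [AddCommGroup X] [Module ℝ X] [Nontrivial X] {f : X → ℝ}
    (hf : IsAsymmNorm f) : symmIndex f ≤ 1 := by
  obtain ⟨x, hx⟩ := exists_ne (0 : X)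
  have h1 := index_mul_le hf x
  have h2 := index_mul_le hf (-x)
  rw [neg_neg] at h2
  obtain ⟨h0, -, -, hz⟩ := hf
  -- If `c > 1`, adding the two estimates gives `c * (f x + f (-x)) ≤ f x + f (-x)`,
  -- so that `f x = f (-x) = 0`.
  by_contra! hlt
  have hx0 := h0 x
  have hx1 := h0 (-x)
  exact hx (hz x (by nlinarith) (by nlinarith))

/-- A positively homogeneous `h` dominated by a multiple of `f` is dominated by `S * f`, where `S`
is its supremum over `f x ≤ 1`. The domination hypothesis makes `S` a genuine supremum and gives
`h x ≤ 0` at points where `f x = 0`. -/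
theorem le_sSup_mul {X : Type*} [AddCommGroup X] [Module ℝ X] {f h : X → ℝ}
    (hf : IsAsymmNorm f) (hh : ∀ c : ℝ, 0 ≤ c → ∀ x, h (c • x) = c * h x)
    (hb : ∃ C ≥ (0 : ℝ), ∀ x, h x ≤ C * f x) (x : X) :
    h x ≤ sSup (h '' {x | f x ≤ 1}) * f x := by
  obtain ⟨h0, hs, -, -⟩ := hf
  obtain ⟨C, hC, hb⟩ := hb
  rcases (h0 x).eq_or_lt with hx | hx
  · have := hb x
    rw [← hx, mul_zero] at this ⊢
    exact this
  · have hle : h ((f x)⁻¹ • x) ≤ sSup (h '' {x | f x ≤ 1}) := by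
      refine le_csSup ⟨C, ?_⟩ ⟨_, by simp [hs _ (inv_nonneg.2 hx.le), hx.ne'], rfl⟩
      rintro _ ⟨y, hy, rfl⟩
      exact (hb y).trans (mul_le_of_le_one_right hC hy)
    rw [hh _ (inv_nonneg.2 hx.le), inv_mul_eq_div] at hle
    exact (div_le_iff₀ hx).1 hle

/-- If `c(X) > 0` and `T ∈ L_c(X,Y)`, then `-T ∈ L_c(X,Y)` and, with
`‖T|_{L_c} := sSup {g (T x) : f x ≤ 1}`, we have
`c(X) * ‖T|_{L_c} ≤ ‖-T|_{L_c} ≤ (1/c(X)) * ‖T|_{L_c}` and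
`‖T‖ ≤ ‖T|_{L_c} ≤ (1/c(X)) * ‖T‖`. -/
theorem asymm_operator_norm_inequalities
    {X Y : Type*} [NormedAddCommGroup X] [NormedSpace ℝ X] [Nontrivial X]
    [NormedAddCommGroup Y] [NormedSpace ℝ Y]
    (f : X → ℝ) (g : Y → ℝ) (hf : IsAsymmNorm f) (hg : IsAsymmNorm g)
    (hXnorm : ∀ x : X, ‖x‖ = max (f x) (f (-x)))
    (hYnorm : ∀ y : Y, ‖y‖ = max (g y) (g (-y)))
    (hc : 0 < sInf ((fun x => f (-x)) '' {x | f x = 1}))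
    (T : X →L[ℝ] Y) (hT : ∃ C ≥ (0 : ℝ), ∀ x, g (T x) ≤ C * f x) :
    (∃ C ≥ (0 : ℝ), ∀ x, g (-(T x)) ≤ C * f x) ∧
    (sInf ((fun x => f (-x)) '' {x | f x = 1}) *
        sSup ((fun x => g (T x)) '' {x | f x ≤ 1}) ≤
      sSup ((fun x => g (-(T x))) '' {x | f x ≤ 1})) ∧
    (sSup ((fun x => g (-(T x))) '' {x | f x ≤ 1}) ≤
      (1 / sInf ((fun x => f (-x)) '' {x | f x = 1})) *
        sSup ((fun x => g (T x)) '' {x | f x ≤ 1})) ∧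
    (‖T‖ ≤ sSup ((fun x => g (T x)) '' {x | f x ≤ 1})) ∧
    (sSup ((fun x => g (T x)) '' {x | f x ≤ 1}) ≤
      (1 / sInf ((fun x => f (-x)) '' {x | f x = 1})) * ‖T‖) := by
  have hneg : ∀ x, g (-(T x)) = g (T (-x)) := fun x => by rw [map_neg]
  have hc1 : symmIndex f ≤ 1 := index_le_one hf
  have hci : ∀ x, symmIndex f * f x ≤ f (-x) := index_mul_le hf
  have hci' : ∀ x, symmIndex f * f (-x) ≤ f x := fun x => by simpa using hci (-x)
  have hgT : ∀ c : ℝ, 0 ≤ c → ∀ x, g (T (c • x)) = c * g (T x) := fun c h x => by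
    rw [map_smul, hg.2.1 c h]
  have hgN : ∀ c : ℝ, 0 ≤ c → ∀ x, g (-(T (c • x))) = c * g (-(T x)) := fun c h x => by
    rw [map_smul, ← smul_neg, hg.2.1 c h]
  have hN : ∃ C ≥ (0 : ℝ), ∀ x, g (-(T x)) ≤ C * f x := by
    obtain ⟨C, hC, hb⟩ := hT
    refine ⟨C / symmIndex f, div_nonneg hC hc.le, fun x => ?_⟩
    rw [hneg, div_mul_eq_mul_div, le_div_iff₀ hc]
    nlinarith [hb (-x), hci' x]
  have hS := le_sSup_mul hf hgT hT
  have hS' := le_sSup_mul hf hgN hN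
  have hS0 : 0 ≤ sSup ((fun x => g (T x)) '' {x | f x ≤ 1}) :=
    Real.sSup_nonneg (by rintro _ ⟨x, -, rfl⟩; exact hg.1 _)
  have hS0' : 0 ≤ sSup ((fun x => g (-(T x))) '' {x | f x ≤ 1}) :=
    Real.sSup_nonneg (by rintro _ ⟨x, -, rfl⟩; exact hg.1 _)
  have hne : {x : X | f x ≤ 1}.Nonempty :=
    ⟨0, by have := hf.2.1 0 le_rfl 0; simp_all⟩
  change 0 < symmIndex f at hc
  change _ ∧ symmIndex f * _ ≤ _ ∧ _ ≤ 1 / symmIndex f * _ ∧ _ ∧ _ ≤ 1 / symmIndex f * _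
  generalize symmIndex f = c at *
  generalize hSdef : sSup ((fun x => g (T x)) '' {x | f x ≤ 1}) = S at *
  generalize hSdef' : sSup ((fun x => g (-(T x))) '' {x | f x ≤ 1}) = S' at *
  refine ⟨hN, ?_, ?_, ?_, ?_⟩
  · rw [← le_div_iff₀' hc, ← hSdef]
    refine csSup_le (hne.image _) ?_
    rintro _ ⟨x, hx, rfl⟩
    have h1 := hS' (-x)
    simp only [map_neg, neg_neg] at h1
    have hx' : f x ≤ 1 := hx
    rw [le_div_iff₀ hc]
    nlinarith [hci' x]
  · rw [one_div_mul_eq_div, ← hSdef']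
    refine csSup_le (hne.image _) ?_
    rintro _ ⟨x, hx, rfl⟩
    have h1 := hS (-x)
    simp only [map_neg] at h1
    have hx' : f x ≤ 1 := hx
    rw [le_div_iff₀ hc]
    nlinarith [hci' x]
  · refine T.opNorm_le_bound hS0 fun x => ?_
    rw [hYnorm, hXnorm, hneg]
    exact max_le ((hS x).trans (mul_le_mul_of_nonneg_left (le_max_left _ _) hS0))
      ((hS (-x)).trans (mul_le_mul_of_nonneg_left (le_max_right _ _) hS0))
  · rw [one_div_mul_eq_div, ← hSdef]
    refine csSup_le (hne.image _) ?_
    rintro _ ⟨x, hx, rfl⟩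
    have hx' : f x ≤ 1 := hx
    have h1 : g (T x) ≤ ‖T x‖ := hYnorm (T x) ▸ le_max_left _ _
    have h2 : ‖x‖ ≤ 1 / c := by
      rw [hXnorm, le_div_iff₀ hc, max_mul_of_nonneg _ _ hc.le]
      refine max_le ?_ ?_
      · nlinarith [hf.1 x]
      · linarith [hci' x]
    calc g (T x) ≤ ‖T‖ * ‖x‖ := h1.trans (T.le_opNorm x)
      _ ≤ ‖T‖ * (1 / c) := mul_le_mul_of_nonneg_left h2 (norm_nonneg _)
      _ = ‖T‖ / c := mul_one_div _ _
end

section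
/- Let (X, f) and (Y, g) be asymmetric normed spaces, each carrying the real normed space structure of its associated norm, with Y a complete normed space. Assume c(X) = 0, i.e., for every ε > 0 there exists x with f x = 1 and f (-x) < ε, and assume there exists e ∈ Y with g e = 1 and g (-e) = 0. Let H : X →L[ℝ] Y satisfy ∃ C ≥ 0, ∀ x, g (H x) ≤ C * f x, and let r > 0. Then, inside the set B̄_r := {T : X →L[ℝ] Y | ∀ x, g (T x) ≤ r * f x} equipped with the subspace topology of the operator norm, the set G(H) := {T ∈ B̄_r | ¬ ∃ C ≥ 0, ∀ x, g (-(H x + T x)) ≤ C * f x} is a countable intersection of open sets and is dense in B̄_r. -/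
lemma IsAsymmNorm.map_zero {X : Type*} [AddCommGroup X] [Module ℝ X] {f : X → ℝ}
    (hf : IsAsymmNorm f) : f 0 = 0 := by
  simpa using hf.2.1 0 le_rfl 0

lemma IsAsymmNorm.continuous {Y : Type*} [NormedAddCommGroup Y] [NormedSpace ℝ Y] {g : Y → ℝ}
    (hg : IsAsymmNorm g) (hYnorm : ∀ y : Y, ‖y‖ = max (g y) (g (-y))) : Continuous g := by
  refine (LipschitzWith.of_le_add (f := g) fun y z => ?_).continuous
  have h := hg.2.2.1 z (y - z)
  rw [add_sub_cancel] at h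
  have h2 : g (y - z) ≤ ‖y - z‖ := by rw [hYnorm]; exact le_max_left _ _
  rw [dist_eq_norm]
  linarith

/-- Hahn–Banach: a functional dominated by `f` that attains the value `f x` at `x`. -/
lemma IsAsymmNorm.exists_supporting {X : Type*} [NormedAddCommGroup X] [NormedSpace ℝ X]
    {f : X → ℝ} (hf : IsAsymmNorm f) (hXnorm : ∀ x : X, ‖x‖ = max (f x) (f (-x)))
    (x : X) (hx : f x = 1) :
    ∃ φ : X →L[ℝ] ℝ, (∀ y, φ y ≤ f y) ∧ φ x = 1 ∧ ‖φ‖ ≤ 1 := by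
  have hx0 : x ≠ 0 := by
    rintro rfl
    rw [hf.map_zero] at hx
    exact zero_ne_one hx
  obtain ⟨φ, hφ, hφf⟩ := exists_extension_of_le_sublinear
    (LinearPMap.mkSpanSingleton (K := ℝ) x (1 : ℝ) hx0) f (fun c hc y => hf.2.1 c hc.le y)
    hf.2.2.1 (by
      rintro ⟨y, hy⟩
      obtain ⟨c, rfl⟩ := Submodule.mem_span_singleton.1 hy
      rw [LinearPMap.mkSpanSingleton'_apply]
      rcases le_total 0 c with hc | hc
      · simp [hf.2.1 c hc, hx]
      · simpa using hc.trans (hf.1 _))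
  have hφx : φ x = 1 := by
    exact (hφ ⟨x, Submodule.mem_span_singleton_self x⟩).trans
      (LinearPMap.mkSpanSingleton_apply ℝ ℝ hx0 1)
  have hb : ∀ y, ‖φ y‖ ≤ 1 * ‖y‖ := by
    intro y
    rw [one_mul, hXnorm, Real.norm_eq_abs, abs_le']
    refine ⟨(hφf y).trans (le_max_left _ _), ?_⟩
    rw [← map_neg]
    exact (hφf _).trans (le_max_right _ _)
  exact ⟨φ.mkContinuous 1 hb, hφf, hφx, φ.mkContinuous_norm_le zero_le_one hb⟩

/-- When `c(X) = 0`, some functional in the dual cone of `f` has a negative outside that cone. -/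
lemma exists_functional {X : Type*} [NormedAddCommGroup X] [NormedSpace ℝ X]
    {f : X → ℝ} (hf : IsAsymmNorm f) (hXnorm : ∀ x : X, ‖x‖ = max (f x) (f (-x)))
    (hcX : ∀ ε > (0 : ℝ), ∃ x : X, f x = 1 ∧ f (-x) < ε) :
    ∃ φ : X →L[ℝ] ℝ, (∀ x, φ x ≤ 2 * f x) ∧ ∀ C : ℝ, 0 ≤ C → ∃ x, C * f (-x) < φ x := by
  choose x hx hx' using fun n : ℕ => hcX ((1 / 4 : ℝ) ^ n) (by positivity)
  choose φ hφf hφx hφn using fun n : ℕ => hf.exists_supporting hXnorm (x n) (hx n)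
  have hsum : Summable fun n : ℕ => (1 / 2 : ℝ) ^ n • φ n := by
    refine Summable.of_norm_bounded summable_geometric_two fun n => ?_
    rw [norm_smul, Real.norm_of_nonneg (by positivity)]
    exact mul_le_of_le_one_right (by positivity) (hφn n)
  obtain ⟨ψ, hψ⟩ := hsum
  have hψy : ∀ y, HasSum (fun n : ℕ => (1 / 2 : ℝ) ^ n * φ n y) (ψ y) := fun y => by
    simpa using hψ.mapL (ContinuousLinearMap.apply ℝ ℝ y)
  refine ⟨ψ, fun y => ?_, fun C hC => ?_⟩
  · exact hasSum_le (fun n => mul_le_mul_of_nonneg_left (hφf n y) (by positivity)) (hψy y)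
      (hasSum_geometric_two.mul_right (f y))
  · obtain ⟨n, hn⟩ := pow_unbounded_of_one_lt (C + 2) (one_lt_two (α := ℝ))
    refine ⟨x n, ?_⟩
    -- `∑ 2⁻ᵐ (φₘ xₙ + f (-xₙ))` has nonnegative terms, so it is at least its `n`-th term.
    have h := le_hasSum ((hψy (x n)).add (hasSum_geometric_two.mul_right (f (-x n)))) n
      (fun m _ => by
        rw [← mul_add]
        have := hφf m (-x n)
        rw [map_neg] at this
        exact mul_nonneg (by positivity) (by linarith))
    rw [hφx, mul_one] at h
    have h0 : 0 ≤ (1 / 2 : ℝ) ^ n * f (-x n) := mul_nonneg (by positivity) (hf.1 _)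
    have h1 : (C + 2) * f (-x n) ≤ (C + 2) * (1 / 4) ^ n :=
      mul_le_mul_of_nonneg_left (hx' n).le (by linarith)
    have h2 : (C + 2) * (1 / 4 : ℝ) ^ n < 2 ^ n * (1 / 4) ^ n :=
      mul_lt_mul_of_pos_right hn (by positivity)
    rw [← mul_pow, show (2 : ℝ) * (1 / 4) = 1 / 2 by norm_num] at h2
    linarith

/-- If `c(X) = 0`, `Y` is a biBanach asymmetric space which is not T1 (there is `e`
with `g e = 1`, `g (-e) = 0`), `H ∈ L_c(X,Y)` and `r > 0`, then inside the closed
asymmetric ball `B̄_r` (with the subspace topology of the operator norm) the set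
`G(H) = {T ∈ B̄_r | -(H + T) ∉ L_c(X,Y)}` is a Gδ dense subset. -/
theorem Gdelta_dense_of_index_zero
    {X Y : Type*} [NormedAddCommGroup X] [NormedSpace ℝ X]
    [NormedAddCommGroup Y] [NormedSpace ℝ Y] [CompleteSpace Y]
    (f : X → ℝ) (g : Y → ℝ) (hf : IsAsymmNorm f) (hg : IsAsymmNorm g)
    (hXnorm : ∀ x : X, ‖x‖ = max (f x) (f (-x)))
    (hYnorm : ∀ y : Y, ‖y‖ = max (g y) (g (-y)))
    (hcX : ∀ ε > (0 : ℝ), ∃ x : X, f x = 1 ∧ f (-x) < ε)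
    (e : Y) (he : g e = 1) (he' : g (-e) = 0)
    (H : X →L[ℝ] Y) (hH : ∃ C ≥ (0 : ℝ), ∀ x, g (H x) ≤ C * f x)
    (r : ℝ) (hr : 0 < r) :
    IsGδ {T : {T : X →L[ℝ] Y // ∀ x, g (T x) ≤ r * f x} |
        ¬ ∃ C ≥ (0 : ℝ), ∀ x, g (-(H x + T.1 x)) ≤ C * f x} ∧
    Dense {T : {T : X →L[ℝ] Y // ∀ x, g (T x) ≤ r * f x} |
        ¬ ∃ C ≥ (0 : ℝ), ∀ x, g (-(H x + T.1 x)) ≤ C * f x} := by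
  have hgc := hg.continuous hYnorm
  constructor
  · have hset : {T : {T : X →L[ℝ] Y // ∀ x, g (T x) ≤ r * f x} |
        ¬ ∃ C ≥ (0 : ℝ), ∀ x, g (-(H x + T.1 x)) ≤ C * f x} =
        ⋂ n : ℕ, {T | ∀ x, g (-(H x + T.1 x)) ≤ n * f x}ᶜ := by
      ext T
      simp only [Set.mem_ofPred_eq, Set.mem_iInter, Set.mem_compl_iff]
      rw [← not_exists, not_iff_not]
      constructor
      · rintro ⟨C, -, h⟩
        obtain ⟨n, hn⟩ := exists_nat_ge C
        exact ⟨n, fun x => (h x).trans (mul_le_mul_of_nonneg_right hn (hf.1 x))⟩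
      · rintro ⟨n, h⟩
        exact ⟨n, n.cast_nonneg, h⟩
    rw [hset]
    refine IsGδ.iInter_of_isOpen fun n => ?_
    rw [isOpen_compl_iff, Set.ofPred_forall]
    refine isClosed_iInter fun x => isClosed_le (hgc.comp ?_) continuous_const
    fun_prop
  · obtain ⟨φ, hφf, hφ⟩ := exists_functional hf hXnorm hcX
    have hge : ∀ c : ℝ, g (c • e) = max c 0 := by
      intro c
      rcases le_total 0 c with hc | hc
      · rw [hg.2.1 c hc, he, mul_one, max_eq_left hc]
      · rw [show c • e = (-c) • (-e) by simp, hg.2.1 (-c) (by linarith), he', mul_zero,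
          max_eq_right hc]
    let S : X →L[ℝ] Y := (r / 2) • φ.smulRight e
    have hSx : ∀ x, S x = (r / 2 * φ x) • e := fun x => by simp [S, mul_smul]
    have hS : ∀ x, g (S x) ≤ r * f x := by
      intro x
      rw [hSx, hge]
      refine max_le ?_ (mul_nonneg hr.le (hf.1 x))
      have := mul_le_mul_of_nonneg_left (hφf x) (by positivity : 0 ≤ r / 2)
      linarith
    have hSneg : ¬ ∃ C ≥ (0 : ℝ), ∀ x, g (-(S x)) ≤ C * f x := by
      rintro ⟨C, hC, h⟩
      obtain ⟨x, hx⟩ := hφ (C / (r / 2)) (by positivity)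
      have h1 := h (-x)
      rw [map_neg, neg_neg, hSx, hge] at h1
      have h2 := (le_max_left _ _).trans h1
      rw [div_mul_eq_mul_div, div_lt_iff₀ (by positivity)] at hx
      linarith
    obtain ⟨D, hD, hH⟩ := hH
    rw [Metric.dense_iff]
    rintro ⟨T, hT⟩ ε hε
    obtain ⟨t, ht0, ht1, htε⟩ : ∃ t : ℝ, 0 < t ∧ t ≤ 1 ∧ t * ‖S - T‖ < ε := by
      have hn := norm_nonneg (S - T)
      refine ⟨ε / (‖S - T‖ + ε), by positivity, ?_, ?_⟩
      · rw [div_le_one (by positivity)]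
        linarith
      · rw [div_mul_eq_mul_div, div_lt_iff₀ (by positivity)]
        nlinarith
    have hball : ∀ x, g (((1 - t) • T + t • S) x) ≤ r * f x := by
      intro x
      have h := hg.2.2.1 ((1 - t) • T x) (t • S x)
      rw [hg.2.1 _ (by linarith), hg.2.1 _ ht0.le] at h
      have h1 := mul_le_mul_of_nonneg_left (hT x) (by linarith : 0 ≤ 1 - t)
      have h2 := mul_le_mul_of_nonneg_left (hS x) ht0.le
      change g ((1 - t) • T x + t • S x) ≤ _
      linarith
    refine ⟨⟨(1 - t) • T + t • S, hball⟩, ?_, ?_⟩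
    · rw [Metric.mem_ball, Subtype.dist_eq, dist_eq_norm]
      change ‖(1 - t) • T + t • S - T‖ < ε
      rw [show (1 - t) • T + t • S - T = t • (S - T) by module, norm_smul,
        Real.norm_of_nonneg ht0.le]
      exact htε
    · rintro ⟨C, hC, h⟩
      refine hSneg ⟨(C + D + (1 - t) * r) / t,
        div_nonneg (by nlinarith) ht0.le, fun x => ?_⟩
      have h1 : g (-(H x + ((1 - t) • T x + t • S x))) ≤ C * f x := h x
      have h2 := hg.2.2.1 (-(H x + ((1 - t) • T x + t • S x)) + H x) ((1 - t) • T x)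
      have h3 := hg.2.2.1 (-(H x + ((1 - t) • T x + t • S x))) (H x)
      rw [show -(H x + ((1 - t) • T x + t • S x)) + H x + (1 - t) • T x = t • (-(S x)) by module,
        hg.2.1 _ ht0.le, hg.2.1 _ (by linarith)] at h2
      have h4 := mul_le_mul_of_nonneg_left (hT x) (by linarith : 0 ≤ 1 - t)
      rw [div_mul_eq_mul_div, le_div_iff₀ ht0]
      linarith [hH x]
end

section
/- Let (X, f) and (Y, g) be asymmetric normed spaces, each carrying the real normed space structure of its associated norm, with Y a complete normed space. Assume c(X) = 0, i.e., for every ε > 0 there exists x with f x = 1 and f (-x) < ε, and assume there exists e ∈ Y with g e = 1 and g (-e) = 0. Then L_c(X, Y) is not closed under negation: there exists a continuous linear map T : X →L[ℝ] Y with (∃ C ≥ 0, ∀ x, g (T x) ≤ C * f x) but ¬ (∃ C ≥ 0, ∀ x, g (-(T x)) ≤ C * f x). -/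
/-- A linear functional dominated by `f` is automatically continuous for the associated norm,
so the Hahn–Banach extension of `c • z ↦ c * f z` is a continuous functional of norm at
most one. -/
lemma exists_supporting_functional {X : Type*} [NormedAddCommGroup X] [NormedSpace ℝ X]
    {f : X → ℝ} (hf : IsAsymmNorm f) (hXnorm : ∀ x : X, ‖x‖ = max (f x) (f (-x)))
    {z : X} (hz : z ≠ 0) :
    ∃ q : X →L[ℝ] ℝ, ‖q‖ ≤ 1 ∧ q z = f z ∧ ∀ x, q x ≤ f x := by
  obtain ⟨hnonneg, hsmul, hadd, -⟩ := hf
  obtain ⟨q, hq, hqf⟩ := exists_extension_of_le_sublinear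
    (LinearPMap.mkSpanSingleton (K := ℝ) z (f z) hz) f
    (fun c hc x => hsmul c hc.le x) hadd (by
      rintro ⟨x, hx⟩
      obtain ⟨c, rfl⟩ := Submodule.mem_span_singleton.1 hx
      refine (LinearPMap.mkSpanSingleton'_apply z (f z) _ c hx).trans_le ?_
      simp only [RingHom.id_apply, smul_eq_mul]
      rcases le_total 0 c with hc | hc
      · exact (hsmul c hc z).ge
      · exact (mul_nonpos_of_nonpos_of_nonneg hc (hnonneg z)).trans (hnonneg _))
  have hbound : ∀ x, ‖q x‖ ≤ 1 * ‖x‖ := by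
    intro x
    rw [one_mul, Real.norm_eq_abs, hXnorm]
    refine abs_le'.2 ⟨(hqf x).trans (le_max_left _ _), ?_⟩
    rw [← map_neg]
    exact (hqf (-x)).trans (le_max_right _ _)
  refine ⟨q.mkContinuous 1 hbound, q.mkContinuous_norm_le zero_le_one hbound, ?_, hqf⟩
  have h := hq ⟨z, Submodule.mem_span_singleton_self z⟩
  exact h.trans (LinearPMap.mkSpanSingleton_apply ℝ ℝ hz (f z))

/-- When `c(X) = 0`, the cone of functionals dominated by `f` contains one whose negative is
not dominated by any multiple of `f`. -/
lemma exists_functional_neg_unbounded {X : Type*} [NormedAddCommGroup X] [NormedSpace ℝ X]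
    {f : X → ℝ} (hf : IsAsymmNorm f) (hXnorm : ∀ x : X, ‖x‖ = max (f x) (f (-x)))
    (hcX : ∀ ε > (0 : ℝ), ∃ x : X, f x = 1 ∧ f (-x) < ε) :
    ∃ p : X →L[ℝ] ℝ, (∀ x, p x ≤ f x) ∧ ∀ C ≥ (0 : ℝ), ∃ z, C * f (-z) < p z := by
  set a : ℕ → ℝ := fun n => (1 / 2) ^ (n + 1) with ha
  have ha0 : ∀ n, 0 < a n := fun n => by positivity
  have hasum : HasSum a 1 := by
    have h := hasSum_geometric_two.mul_right (1 / 2 : ℝ)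
    simpa [ha, pow_succ] using h
  have hz : ∀ n, ∃ z : X, f z = 1 ∧ f (-z) < a n ^ 2 := fun n => hcX _ (pow_pos (ha0 n) 2)
  choose z hz1 hz2 using hz
  have hzne : ∀ n, z n ≠ 0 := by
    intro n h
    have h0 : f (0 : X) = 0 := by simpa using hf.2.1 0 le_rfl 0
    have := hz1 n
    rw [h, h0] at this
    exact zero_ne_one this
  choose q hq1 hqz hqf using fun n => exists_supporting_functional hf hXnorm (hzne n)
  have hsummable : Summable fun n => a n • q n := by
    refine Summable.of_norm_bounded hasum.summable fun n => ?_
    rw [norm_smul, Real.norm_of_nonneg (ha0 n).le]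
    exact mul_le_of_le_one_right (ha0 n).le (hq1 n)
  obtain ⟨p, hp⟩ := hsummable
  have hpx : ∀ x, HasSum (fun n => a n * q n x) (p x) := fun x => by
    simpa using hp.mapL (ContinuousLinearMap.apply ℝ ℝ x)
  refine ⟨p, fun x => ?_, fun C hC => ?_⟩
  · have h := hasum.mul_right (f x)
    rw [one_mul] at h
    exact hasSum_le (fun n => mul_le_mul_of_nonneg_left (hqf n x) (ha0 n).le) (hpx x) h
  · by_contra! hcon
    have hlow : ∀ n, a n ≤ p (z n) + f (-z n) := by
      intro n
      have h := (hpx (z n)).add (hasum.mul_right (f (-z n)))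
      rw [one_mul] at h
      have hterm : ∀ k, 0 ≤ a k * q k (z n) + a k * f (-z n) := by
        intro k
        have h1 := hqf k (-z n)
        rw [map_neg] at h1
        rw [← mul_add]
        exact mul_nonneg (ha0 k).le (by linarith)
      have h2 := le_hasSum h n fun k _ => hterm k
      rw [hqz, hz1, mul_one] at h2
      exact (le_add_of_nonneg_right (mul_nonneg (ha0 n).le (hf.1 _))).trans h2
    have hkey : ∀ n, 1 < (C + 1) * a n := by
      intro n
      have h1 := hlow n
      have h2 := hcon (z n)
      have h3 : (C + 1) * f (-z n) < (C + 1) * a n ^ 2 :=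
        mul_lt_mul_of_pos_left (hz2 n) (by linarith)
      have h4 : 1 * a n < ((C + 1) * a n) * a n := by nlinarith
      exact lt_of_mul_lt_mul_right h4 (ha0 n).le
    have hlim := hasum.summable.tendsto_atTop_zero.const_mul (C + 1)
    have := ge_of_tendsto' hlim fun n => (hkey n).le
    norm_num at this

/-- If `c(X) = 0` and `Y` is a biBanach asymmetric space which is not T1, then
`L_c(X,Y)` is not closed under negation: there is `T ∈ L_c(X,Y)` with
`-T ∉ L_c(X,Y)`. -/
theorem Lc_not_vector_space_of_index_zero
    {X Y : Type*} [NormedAddCommGroup X] [NormedSpace ℝ X]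
    [NormedAddCommGroup Y] [NormedSpace ℝ Y] [CompleteSpace Y]
    (f : X → ℝ) (g : Y → ℝ) (hf : IsAsymmNorm f) (hg : IsAsymmNorm g)
    (hXnorm : ∀ x : X, ‖x‖ = max (f x) (f (-x)))
    (hYnorm : ∀ y : Y, ‖y‖ = max (g y) (g (-y)))
    (hcX : ∀ ε > (0 : ℝ), ∃ x : X, f x = 1 ∧ f (-x) < ε)
    (e : Y) (he : g e = 1) (he' : g (-e) = 0) :
    ∃ T : X →L[ℝ] Y, (∃ C ≥ (0 : ℝ), ∀ x, g (T x) ≤ C * f x) ∧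
      ¬ (∃ C ≥ (0 : ℝ), ∀ x, g (-(T x)) ≤ C * f x) := by
  obtain ⟨p, hpf, hp⟩ := exists_functional_neg_unbounded hf hXnorm hcX
  refine ⟨p.smulRight e, ⟨1, zero_le_one, fun x => ?_⟩, ?_⟩
  · rw [ContinuousLinearMap.smulRight_apply, one_mul]
    rcases le_total 0 (p x) with h | h
    · rw [hg.2.1 _ h, he, mul_one]
      exact hpf x
    · rw [← neg_smul_neg, hg.2.1 _ (neg_nonneg.2 h), he', mul_zero]
      exact hf.1 x
  · rintro ⟨C, hC, hT⟩
    obtain ⟨z, hz⟩ := hp C hC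
    have hpos : 0 ≤ p z := (mul_nonneg hC (hf.1 _)).trans hz.le
    have h := hT (-z)
    rw [map_neg, neg_neg, ContinuousLinearMap.smulRight_apply, hg.2.1 _ hpos, he, mul_one] at h
    exact absurd h hz.not_ge
end

section
/- Let (X, f) and (Y, g) be asymmetric normed spaces, each carrying the real normed space structure of its associated norm. Suppose there exists a continuous linear map T : X →L[ℝ] Y with (∃ C ≥ 0, ∀ x, g (T x) ≤ C * f x) but ¬ (∃ C ≥ 0, ∀ x, g (-(T x)) ≤ C * f x). Then c(X) = 0 and c(Y) = 0; explicitly, for every ε > 0 there exists z ∈ X with f z = 1 and f (-z) < ε, and there exists y ∈ Y with g y = 1 and g (-y) < ε. -/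
/-- If `c(X) = 0` fails at some `ε > 0`, then `f (-x)` is controlled by `f x`: normalising `-x`
gives `ε * f (-x) ≤ f x`. -/
lemma IsAsymmNorm.neg_le_of_index_pos {X : Type*} [AddCommGroup X] [Module ℝ X] {f : X → ℝ}
    (hf : IsAsymmNorm f) {ε : ℝ} (hε : 0 < ε) (h : ∀ z, f z = 1 → ε ≤ f (-z)) (x : X) :
    f (-x) ≤ ε⁻¹ * f x := by
  obtain ⟨hnn, hsmul, -, -⟩ := hf
  rcases (hnn (-x)).eq_or_lt with h0 | hpos
  · rw [← h0]
    exact mul_nonneg (inv_nonneg.2 hε.le) (hnn x)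
  · have hi := (inv_pos.2 hpos).le
    have key := h ((f (-x))⁻¹ • (-x)) (by rw [hsmul _ hi, inv_mul_cancel₀ hpos.ne'])
    rw [← smul_neg, neg_neg, hsmul _ hi, inv_mul_eq_div, le_div_iff₀ hpos] at key
    rwa [inv_mul_eq_div, le_div_iff₀ hε, mul_comm]

/-- If some `T ∈ L_c(X,Y)` has `-T ∉ L_c(X,Y)`, then `c(X) = 0` and `c(Y) = 0`. -/
theorem index_zero_of_Lc_not_vector_space
    {X Y : Type*} [NormedAddCommGroup X] [NormedSpace ℝ X]
    [NormedAddCommGroup Y] [NormedSpace ℝ Y]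
    (f : X → ℝ) (g : Y → ℝ) (hf : IsAsymmNorm f) (hg : IsAsymmNorm g)
    (hXnorm : ∀ x : X, ‖x‖ = max (f x) (f (-x)))
    (hYnorm : ∀ y : Y, ‖y‖ = max (g y) (g (-y)))
    (T : X →L[ℝ] Y) (hT : ∃ C ≥ (0 : ℝ), ∀ x, g (T x) ≤ C * f x)
    (hT' : ¬ (∃ C ≥ (0 : ℝ), ∀ x, g (-(T x)) ≤ C * f x)) :
    (∀ ε > (0 : ℝ), ∃ z : X, f z = 1 ∧ f (-z) < ε) ∧
    (∀ ε > (0 : ℝ), ∃ y : Y, g y = 1 ∧ g (-y) < ε) := by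
  obtain ⟨C, hC, hT⟩ := hT
  constructor
  · intro ε hε
    by_contra! h
    refine hT' ⟨C * ε⁻¹, by positivity, fun x => ?_⟩
    calc g (-(T x)) = g (T (-x)) := by rw [map_neg]
      _ ≤ C * f (-x) := hT _
      _ ≤ C * (ε⁻¹ * f x) := mul_le_mul_of_nonneg_left (hf.neg_le_of_index_pos hε h x) hC
      _ = C * ε⁻¹ * f x := by ring
  · intro ε hε
    by_contra! h
    refine hT' ⟨ε⁻¹ * C, by positivity, fun x => ?_⟩
    calc g (-(T x)) ≤ ε⁻¹ * g (T x) := hg.neg_le_of_index_pos hε h _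
      _ ≤ ε⁻¹ * (C * f x) := mul_le_mul_of_nonneg_left (hT x) (inv_nonneg.2 hε.le)
      _ = ε⁻¹ * C * f x := by ring
end

section
/- Let X be a nontrivial real vector space, f an asymmetric norm on X, and let X carry the real normed space structure of the associated norm ‖x‖ = max (f x) (f (-x)). Then the dual cone X^♭ := {p : X →L[ℝ] ℝ | ∃ C ≥ 0, ∀ x, p x ≤ C * f x} is closed under negation (i.e., is a vector space) if and only if sInf {f (-x) : x ∈ X, f x = 1} > 0. -/
/-- Hahn–Banach: a point with `f a = 1` has a norming functional dominated by `f`, which is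
automatically continuous for the associated norm. -/
lemma exists_dual_le_eq {X : Type*} [NormedAddCommGroup X] [NormedSpace ℝ X]
    {f : X → ℝ} (hf : IsAsymmNorm f) (hXnorm : ∀ x : X, ‖x‖ = max (f x) (f (-x)))
    {a : X} (ha : f a = 1) :
    ∃ p : X →L[ℝ] ℝ, (∀ x, p x ≤ f x) ∧ p a = 1 ∧ ‖p‖ ≤ 1 := by
  obtain ⟨h0, hmul, hadd, -⟩ := hf
  have ha0 : a ≠ 0 := by
    rintro rfl
    have := hmul 0 le_rfl 0
    simp [ha] at this
  obtain ⟨g, hg, hgf⟩ := exists_extension_of_le_sublinear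
    (LinearPMap.mkSpanSingleton (K := ℝ) a (1 : ℝ) ha0) f
    (fun c hc x => hmul c hc.le x) hadd (by
      rintro ⟨y, hy⟩
      obtain ⟨c, rfl⟩ := Submodule.mem_span_singleton.1 hy
      rw [LinearPMap.mkSpanSingleton'_apply]
      rcases le_total 0 c with hc | hc
      · simp [hmul c hc, ha]
      · have := h0 (c • a)
        simp only [RingHom.id_apply, smul_eq_mul, mul_one]
        linarith)
  have hbound : ∀ x, ‖g x‖ ≤ 1 * ‖x‖ := by
    intro x
    rw [one_mul, hXnorm, Real.norm_eq_abs, abs_le]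
    have h1 := hgf x
    have h2 := hgf (-x)
    rw [map_neg] at h2
    have h3 := le_max_left (f x) (f (-x))
    have h4 := le_max_right (f x) (f (-x))
    constructor <;> linarith
  refine ⟨g.mkContinuous 1 hbound, hgf, ?_, g.mkContinuous_norm_le zero_le_one hbound⟩
  exact (hg ⟨a, Submodule.mem_span_singleton_self a⟩).trans
    (LinearPMap.mkSpanSingleton'_apply_self _ _ _ _)

/-- The dual cone `X^♭ = {p | ∃ C ≥ 0, ∀ x, p x ≤ C * f x}` is closed under negation
(i.e. is a vector space) iff `c(X) > 0`. -/
theorem dual_cone_vector_space_iff_index_pos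
    {X : Type*} [NormedAddCommGroup X] [NormedSpace ℝ X] [Nontrivial X]
    (f : X → ℝ) (hf : IsAsymmNorm f)
    (hXnorm : ∀ x : X, ‖x‖ = max (f x) (f (-x))) :
    (∀ p : X →L[ℝ] ℝ, (∃ C ≥ (0 : ℝ), ∀ x, p x ≤ C * f x) →
        (∃ C ≥ (0 : ℝ), ∀ x, (-p) x ≤ C * f x)) ↔
    0 < sInf ((fun x => f (-x)) '' {x | f x = 1}) := by
  have hf' := hf
  obtain ⟨h0, hmul, hadd, hsep⟩ := hf'
  have hbdd : BddBelow ((fun x => f (-x)) '' {x | f x = 1}) := by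
    refine ⟨0, ?_⟩
    rintro _ ⟨x, -, rfl⟩
    exact h0 _
  -- Rescaling a point with `f y > 0` onto the level set `f = 1`.
  have hscale : ∀ y, 0 < f y → f ((f y)⁻¹ • y) = 1 := fun y hy => by
    rw [hmul _ (inv_nonneg.2 hy.le), inv_mul_cancel₀ hy.ne']
  constructor
  · intro H
    by_contra hc
    have hne : ((fun x => f (-x)) '' {x | f x = 1}).Nonempty := by
      obtain ⟨y, hy⟩ := exists_ne (0 : X)
      have : ∃ z, 0 < f z := by
        by_contra! hz
        exact hy (hsep y (le_antisymm (hz y) (h0 y)) (le_antisymm (hz (-y)) (h0 (-y))))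
      obtain ⟨z, hz⟩ := this
      exact ⟨_, _, hscale z hz, rfl⟩
    have hex : ∀ k : ℕ, ∃ x, f x = 1 ∧ f (-x) < (1 / 4 : ℝ) ^ k := by
      intro k
      have hlt : sInf ((fun x => f (-x)) '' {x | f x = 1}) < (1 / 4 : ℝ) ^ k :=
        (not_lt.1 hc).trans_lt (by positivity)
      obtain ⟨_, ⟨x, hx, rfl⟩, hlt'⟩ := exists_lt_of_csInf_lt hne hlt
      exact ⟨x, hx, hlt'⟩
    choose x hx1 hx2 using hex
    choose q hqf hq1 hqn using fun k => exists_dual_le_eq hf hXnorm (hx1 k)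
    have hsum : Summable fun k => (1 / 2 : ℝ) ^ k • q k := by
      refine Summable.of_norm_bounded summable_geometric_two fun k => ?_
      rw [norm_smul, Real.norm_of_nonneg (by positivity)]
      exact mul_le_of_le_one_right (by positivity) (hqn k)
    obtain ⟨p, hp⟩ := hsum
    have hpx : ∀ y, HasSum (fun k => (1 / 2 : ℝ) ^ k * q k y) (p y) := fun y => by
      simpa using hp.mapL (ContinuousLinearMap.apply ℝ ℝ y)
    obtain ⟨C, hC, hpC⟩ := H p ⟨2, by norm_num, fun y =>
      hasSum_le (fun k => mul_le_mul_of_nonneg_left (hqf k y) (by positivity))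
        (hpx y) (hasSum_geometric_two.mul_right (f y))⟩
    have key : ∀ k : ℕ, (2 : ℝ) ^ k ≤ C + 2 := by
      intro k
      -- All terms of `∑ 2⁻ʲ (q j (x k) + f (-x k))` are nonnegative, so its `k`-th term is at
      -- most the sum.
      have hs := (hpx (x k)).add (hasSum_geometric_two.mul_right (f (-x k)))
      have h1 := le_hasSum hs k fun j _ => by
        have := hqf j (-x k)
        rw [map_neg] at this
        rw [← mul_add]
        exact mul_nonneg (by positivity) (by linarith)
      simp only [hq1, mul_one] at h1
      have h2 := hpC (-x k)
      simp only [neg_apply, map_neg, neg_neg] at h2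
      have h3 : 0 ≤ (1 / 2 : ℝ) ^ k * f (-x k) := mul_nonneg (by positivity) (h0 _)
      have h4 : (1 / 2 : ℝ) ^ k ≤ (C + 2) * (1 / 4 : ℝ) ^ k := by
        have := mul_le_mul_of_nonneg_left (hx2 k).le (by linarith : 0 ≤ C + 2)
        linarith
      have h5 := mul_le_mul_of_nonneg_right h4 (by positivity : (0 : ℝ) ≤ 4 ^ k)
      rw [mul_assoc, ← mul_pow, ← mul_pow] at h5
      norm_num at h5
      exact h5
    obtain ⟨k, hk⟩ := pow_unbounded_of_one_lt (C + 2) (one_lt_two : (1 : ℝ) < 2)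
    exact absurd (key k) (not_le.2 hk)
  · intro hc
    set c := sInf ((fun x => f (-x)) '' {x | f x = 1})
    have hcf : ∀ y, c * f y ≤ f (-y) := by
      intro y
      rcases (h0 y).eq_or_lt with hy | hy
      · rw [← hy, mul_zero]
        exact h0 _
      · have h1 : c ≤ f (-((f y)⁻¹ • y)) := csInf_le hbdd ⟨_, hscale y hy, rfl⟩
        rw [← smul_neg, hmul _ (inv_nonneg.2 hy.le), inv_mul_eq_div, le_div_iff₀ hy] at h1
        exact h1
    rintro p ⟨C, hC, hp⟩
    refine ⟨C / c, by positivity, fun y => ?_⟩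
    have h1 := hp (-y)
    have h2 := hcf (-y)
    rw [neg_neg] at h2
    rw [map_neg] at h1
    rw [neg_apply, div_mul_eq_mul_div, le_div_iff₀ hc]
    nlinarith [mul_le_mul_of_nonneg_left h2 hC, mul_le_mul_of_nonneg_right h1 hc.le]
end

section
/- Let (X, f) and (Y, g) be asymmetric normed spaces, each carrying the real normed space structure of its associated norm, with Y a complete normed space. Assume c(X) = 0 (for every ε > 0 there exists x with f x = 1 and f (-x) < ε) and that there exists e ∈ Y with g e = 1 and g (-e) = 0. Then the set L_c(X, Y) ∩ (-L_c(X, Y)) = {T : X →L[ℝ] Y | (∃ C ≥ 0, ∀ x, g (T x) ≤ C * f x) ∧ (∃ C ≥ 0, ∀ x, g (-(T x)) ≤ C * f x)} is meagre (of first Baire category) in X →L[ℝ] Y with the operator-norm topology. -/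
/-- If no positive constant bounds `f` from below on `{y | 1 ≤ ‖y‖}`, then the operators bounded by
a fixed multiple of `f` form a set with empty interior. -/
lemma interior_bounded_eq_empty
    {X Y : Type*} [NormedAddCommGroup X] [NormedSpace ℝ X]
    [NormedAddCommGroup Y] [NormedSpace ℝ Y]
    (f : X → ℝ) (hsmall : ∀ ε > (0 : ℝ), ∃ y : X, 1 ≤ ‖y‖ ∧ f y < ε)
    (e : Y) (he : ‖e‖ = 1) (n : ℕ) :
    interior {T : X →L[ℝ] Y | ∀ x, ‖T x‖ ≤ n * f x} = ∅ := by
  rw [Set.eq_empty_iff_forall_notMem]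
  intro T₀ hT₀
  obtain ⟨r, hr, hball⟩ := Metric.mem_nhds_iff.1 (mem_interior_iff_mem_nhds.1 hT₀)
  obtain ⟨y, hy, hfy⟩ := hsmall (r / (4 * (n + 1))) (by positivity)
  have hy0 : ‖y‖ ≠ 0 := by linarith
  obtain ⟨φ, hφ, hφy⟩ := exists_dual_vector ℝ y hy0
  have hφy' : φ y = ‖y‖ := by simpa using hφy
  set S : X →L[ℝ] Y := (r / 2) • φ.smulRight e with hS
  have hSn : ‖S‖ < r := by
    rw [hS, norm_smul, ContinuousLinearMap.norm_smulRight_apply, hφ, he, Real.norm_eq_abs,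
      abs_of_pos (by positivity)]
    linarith
  have hSy : ‖S y‖ = r / 2 * ‖y‖ := by
    simp [hS, norm_smul, hφy', he, abs_of_pos hr]
  have h0 : ‖T₀ y‖ ≤ n * f y := hball (Metric.mem_ball_self hr) y
  have h1 : ‖(T₀ + S) y‖ ≤ n * f y := hball (by simpa using hSn) y
  have h2 : ‖S y‖ ≤ ‖(T₀ + S) y‖ + ‖T₀ y‖ := by
    have h := norm_sub_le ((T₀ + S) y) (T₀ y)
    simpa using h
  have h3 : f y * (4 * (n + 1)) < r := (lt_div_iff₀ (by positivity)).1 hfy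
  have h4 : r / 2 ≤ r / 2 * ‖y‖ := le_mul_of_one_le_right (by positivity) hy
  have h5 : r / 2 ≤ 2 * (n * f y) := by linarith
  have h6 : 0 < f y := pos_of_mul_pos_right (by linarith : 0 < (n : ℝ) * f y) (Nat.cast_nonneg n)
  nlinarith

/-- If `c(X) = 0` and `Y` is a biBanach asymmetric space which is not T1, then
`L_c(X,Y) ∩ (-L_c(X,Y))` is meagre in `X →L[ℝ] Y` for the operator-norm topology. -/
theorem Lc_inter_neg_Lc_meagre
    {X Y : Type*} [NormedAddCommGroup X] [NormedSpace ℝ X]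
    [NormedAddCommGroup Y] [NormedSpace ℝ Y] [CompleteSpace Y]
    (f : X → ℝ) (g : Y → ℝ) (hf : IsAsymmNorm f) (hg : IsAsymmNorm g)
    (hXnorm : ∀ x : X, ‖x‖ = max (f x) (f (-x)))
    (hYnorm : ∀ y : Y, ‖y‖ = max (g y) (g (-y)))
    (hcX : ∀ ε > (0 : ℝ), ∃ x : X, f x = 1 ∧ f (-x) < ε)
    (e : Y) (he : g e = 1) (he' : g (-e) = 0) :
    IsMeagre {T : X →L[ℝ] Y |
      (∃ C ≥ (0 : ℝ), ∀ x, g (T x) ≤ C * f x) ∧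
      (∃ C ≥ (0 : ℝ), ∀ x, g (-(T x)) ≤ C * f x)} := by
  have he1 : ‖e‖ = 1 := by rw [hYnorm, he, he']; norm_num
  have hsmall : ∀ ε > (0 : ℝ), ∃ y : X, 1 ≤ ‖y‖ ∧ f y < ε := by
    intro ε hε
    obtain ⟨x, hx, hx'⟩ := hcX ε hε
    exact ⟨-x, by rw [norm_neg, hXnorm, ← hx]; exact le_max_left _ _, hx'⟩
  have hmeagre : IsMeagre (⋃ n : ℕ, {T : X →L[ℝ] Y | ∀ x, ‖T x‖ ≤ n * f x}) := by
    refine isMeagre_iUnion fun n => IsNowhereDense.isMeagre ?_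
    have hclosed : IsClosed {T : X →L[ℝ] Y | ∀ x, ‖T x‖ ≤ n * f x} := by
      simp only [Set.ofPred_forall]
      exact isClosed_iInter fun x => isClosed_le (by fun_prop) continuous_const
    rw [hclosed.isNowhereDense_iff]
    exact interior_bounded_eq_empty f hsmall e he1 n
  refine hmeagre.mono ?_
  rintro T ⟨⟨C, -, hC⟩, ⟨D, -, hD⟩⟩
  obtain ⟨n, hn⟩ := exists_nat_ge (max C D)
  refine Set.mem_iUnion.2 ⟨n, fun x => ?_⟩
  rw [hYnorm]
  have hfx := hf.1 x
  exact max_le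
    ((hC x).trans (mul_le_mul_of_nonneg_right ((le_max_left _ _).trans hn) hfx))
    ((hD x).trans (mul_le_mul_of_nonneg_right ((le_max_right _ _).trans hn) hfx))
end

section
/- Let X be a real vector space, f an asymmetric norm on X, and let X carry the real normed space structure of the associated norm ‖x‖ = max (f x) (f (-x)). Then X is a T1 space (equivalently, f x > 0 for every x ≠ 0) if and only if the dual cone X^♭ := {p : X →L[ℝ] ℝ | ∃ C ≥ 0, ∀ x, p x ≤ C * f x}, viewed as a subset of the weak-star dual of X, is weak-star dense in the whole continuous dual X*. -/
/-- Hahn–Banach for an asymmetric norm: some continuous functional dominated by `f` attains `f`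
at a given nonzero point. -/
theorem IsAsymmNorm.exists_le_apply_eq {X : Type*} [NormedAddCommGroup X] [NormedSpace ℝ X]
    {f : X → ℝ} (hf : IsAsymmNorm f) (hXnorm : ∀ x : X, ‖x‖ = max (f x) (f (-x)))
    {x : X} (hx : x ≠ 0) : ∃ p : X →L[ℝ] ℝ, (∀ y, p y ≤ f y) ∧ p x = f x := by
  obtain ⟨h0, hsmul, hadd, -⟩ := hf
  obtain ⟨g, hg, hgf⟩ := exists_extension_of_le_sublinear
    (LinearPMap.mkSpanSingleton (K := ℝ) x (f x) hx) f (fun c hc y => hsmul c hc.le y) hadd (by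
      rintro ⟨y, hy⟩
      obtain ⟨c, rfl⟩ := Submodule.mem_span_singleton.1 hy
      rw [LinearPMap.mkSpanSingleton'_apply, smul_eq_mul, RingHom.id_apply]
      rcases le_total 0 c with hc | hc
      · exact (hsmul c hc x).ge
      · exact (mul_nonpos_of_nonpos_of_nonneg hc (h0 x)).trans (h0 _))
  refine ⟨g.mkContinuous 1 fun y => ?_, hgf, ?_⟩
  · rw [Real.norm_eq_abs, one_mul, hXnorm, abs_le']
    refine ⟨(hgf y).trans (le_max_left _ _), ?_⟩
    rw [← map_neg]
    exact (hgf (-y)).trans (le_max_right _ _)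
  · exact (hg ⟨x, Submodule.mem_span_singleton_self x⟩).trans
      (LinearPMap.mkSpanSingleton'_apply_self _ _ _ _)

/-- `X` is T1 (i.e. `f x > 0` for `x ≠ 0`) iff the dual cone
`X^♭ = {p | ∃ C ≥ 0, ∀ x, p x ≤ C * f x}` is weak-star dense in `X*`. -/
theorem T1_iff_dual_cone_weakStar_dense
    {X : Type*} [NormedAddCommGroup X] [NormedSpace ℝ X]
    (f : X → ℝ) (hf : IsAsymmNorm f)
    (hXnorm : ∀ x : X, ‖x‖ = max (f x) (f (-x))) :
    (∀ x : X, x ≠ 0 → 0 < f x) ↔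
    Dense {p : WeakDual ℝ X | ∃ C ≥ (0 : ℝ), ∀ x, p x ≤ C * f x} := by
  set K := {p : WeakDual ℝ X | ∃ C ≥ (0 : ℝ), ∀ x, p x ≤ C * f x}
  constructor
  · intro hT q
    by_contra hq
    have hconv : Convex ℝ K := by
      rintro p ⟨C, hC, hp⟩ r ⟨D, hD, hr⟩ a b ha hb -
      refine ⟨a * C + b * D, by positivity, fun x => ?_⟩
      change a * p x + b * r x ≤ _
      nlinarith [mul_le_mul_of_nonneg_left (hp x) ha, mul_le_mul_of_nonneg_left (hr x) hb]
    have : LocallyConvexSpace ℝ (WeakDual ℝ X) :=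
      inferInstanceAs (LocallyConvexSpace ℝ (WeakBilin (topDualPairing ℝ X)))
    obtain ⟨u, s, hus, hsq⟩ := geometric_hahn_banach_closed_point
      (E := WeakDual ℝ X) hconv.closure isClosed_closure hq
    obtain ⟨x, hx⟩ : ∃ x : X, ∀ p : WeakDual ℝ X, u p = p x := by
      obtain ⟨x, rfl⟩ := LinearMap.dualEmbedding_surjective (topDualPairing ℝ X) u
      exact ⟨x, fun p => rfl⟩
    have hs : 0 < s := by
      have := hus 0 (subset_closure ⟨0, le_rfl, fun x => (zero_mul (f x)).ge⟩)
      rwa [map_zero] at this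
    have hx0 : x ≠ 0 := by
      rintro rfl
      have := hx q
      rw [map_zero] at this
      linarith
    obtain ⟨p, hpf, hpx⟩ := hf.exists_le_apply_eq hXnorm hx0
    have hfx := hT x hx0
    -- The multiple `(s / f x) • p` lies in the cone and takes the value `s` at `x`.
    have hmem : (s / f x) • StrongDual.toWeakDual p ∈ K :=
      ⟨s / f x, by positivity, fun y => mul_le_mul_of_nonneg_left (hpf y) (by positivity)⟩
    have h1 := hus _ (subset_closure hmem)
    rw [hx] at h1
    change s / f x * p x < s at h1
    rw [hpx, div_mul_cancel₀ _ hfx.ne'] at h1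
    exact lt_irrefl _ h1
  · intro hd x hx
    refine lt_of_le_of_ne (hf.1 x) fun h => ?_
    have hcl : IsClosed {p : WeakDual ℝ X | p x ≤ 0} :=
      isClosed_le (WeakDual.eval_continuous x) continuous_const
    have hsub : K ⊆ {p : WeakDual ℝ X | p x ≤ 0} := by
      rintro p ⟨C, -, hp⟩
      have := hp x
      rwa [← h, mul_zero] at this
    obtain ⟨g, -, hg⟩ := exists_dual_vector ℝ x (norm_ne_zero_iff.2 hx)
    have h1 : g x ≤ 0 := closure_minimal hsub hcl (hd (StrongDual.toWeakDual g))
    rw [hg] at h1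
    exact absurd h1 (not_le.2 (norm_pos_iff.2 hx))
end

section
/- Let X be a nontrivial finite-dimensional real vector space, f an asymmetric norm on X with f x > 0 for every x ≠ 0 (X is T1), and let X carry the real normed space structure of the associated norm ‖x‖ = max (f x) (f (-x)). Then sInf {f (-x) : x ∈ X, f x = 1} > 0; consequently there exists a constant c > 0 with c * ‖x‖ ≤ f x ≤ ‖x‖ for all x, so the asymmetric norm is equivalent to the associated norm. -/
/-- A finite-dimensional T1 asymmetric normed space has positive index of symmetry;
consequently the asymmetric norm is equivalent to the associated norm. -/
theorem index_pos_of_finiteDimensional_T1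
    {X : Type*} [NormedAddCommGroup X] [NormedSpace ℝ X]
    [FiniteDimensional ℝ X] [Nontrivial X]
    (f : X → ℝ) (hf : IsAsymmNorm f)
    (hXnorm : ∀ x : X, ‖x‖ = max (f x) (f (-x)))
    (hT1 : ∀ x : X, x ≠ 0 → 0 < f x) :
    0 < sInf ((fun x => f (-x)) '' {x | f x = 1}) ∧
    ∃ c > (0 : ℝ), ∀ x : X, c * ‖x‖ ≤ f x ∧ f x ≤ ‖x‖ := by
  obtain ⟨h0, hsmul, hadd, -⟩ := hf
  have hle : ∀ x : X, f x ≤ ‖x‖ := fun x => by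
    rw [hXnorm x]
    exact le_max_left _ _
  have hsub : ∀ x y : X, f x ≤ f y + ‖x - y‖ := fun x y => by
    have h := hadd y (x - y)
    rw [add_sub_cancel] at h
    linarith [hle (x - y)]
  have hcont : Continuous f := by
    refine (LipschitzWith.of_le_add_mul 1 fun x y => ?_).continuous
    simpa [dist_eq_norm] using hsub x y
  obtain ⟨u, hu, hmin⟩ := (isCompact_sphere (0 : X) 1).exists_isMinOn
    (NormedSpace.sphere_nonempty.mpr zero_le_one) hcont.continuousOn
  have hu1 : ‖u‖ = 1 := by simpa using hu
  have hc : 0 < f u := hT1 u (norm_ne_zero_iff.mp (by rw [hu1]; exact one_ne_zero))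
  have hbound : ∀ x : X, f u * ‖x‖ ≤ f x := fun x => by
    rcases eq_or_ne x 0 with rfl | hx
    · simpa using h0 0
    have hpos : 0 < ‖x‖ := norm_pos_iff.mpr hx
    have hmem : ‖x‖⁻¹ • x ∈ Metric.sphere (0 : X) 1 := by
      simp [norm_smul, hpos.ne']
    have h : f u ≤ f (‖x‖⁻¹ • x) := hmin hmem
    rw [hsmul _ (inv_nonneg.mpr hpos.le), inv_mul_eq_div] at h
    exact (le_div_iff₀ hpos).mp h
  refine ⟨lt_of_lt_of_le hc (le_csInf ?_ ?_), f u, hc, fun x => ⟨hbound x, hle x⟩⟩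
  -- The set is nonempty (so `sInf` is a genuine infimum): rescale `u` to have `f`-value `1`.
  · exact Set.Nonempty.image _ ⟨(f u)⁻¹ • u, by
      simp only [Set.mem_setOf_eq]
      rw [hsmul _ (inv_nonneg.mpr hc.le), inv_mul_cancel₀ hc.ne']⟩
  · rintro _ ⟨x, hx, rfl⟩
    have hx1 : f x = 1 := hx
    have hnorm : 1 ≤ ‖x‖ := hx1 ▸ hle x
    calc f u ≤ f u * ‖x‖ := le_mul_of_one_le_right hc.le hnorm
      _ = f u * ‖-x‖ := by rw [norm_neg]
      _ ≤ f (-x) := hbound (-x)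
end

section
/- Let X be a nontrivial real vector space and f an asymmetric norm on X. Define f₁ : X → ℝ by f₁ x = f x + max (f x) (f (-x)). Then f₁ is an asymmetric norm on X and sInf {f₁ (-x) : x ∈ X, f₁ x = 1} > 0; moreover, if f is not symmetric (there exists x with f x ≠ f (-x)), then sInf {f₁ (-x) : x ∈ X, f₁ x = 1} < 1. -/
/-- Rescaling: a vector with `f₁ x > 0` normalizes to a point of `{f₁ = 1}`, and the value of
`f₁` at its negative becomes the ratio `f₁ (-x) / f₁ x`. -/
lemma ratio_mem_image {X : Type*} [AddCommGroup X] [Module ℝ X]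
    (f : X → ℝ) (hf : IsAsymmNorm f) (x : X) (hx : 0 < f x + max (f x) (f (-x))) :
    (f (-x) + max (f (-x)) (f x)) / (f x + max (f x) (f (-x))) ∈
      (fun x => f (-x) + max (f (-x)) (f x)) '' {x | f x + max (f x) (f (-x)) = 1} := by
  obtain ⟨-, hom, -, -⟩ := hf
  set t := f x + max (f x) (f (-x)) with ht
  have hinv : 0 ≤ t⁻¹ := (inv_pos.2 hx).le
  refine ⟨t⁻¹ • x, ?_, ?_⟩
  · simp only [Set.mem_setOf_eq, ← smul_neg, hom _ hinv]
    rw [← mul_max_of_nonneg _ _ hinv, ← mul_add, ← ht, inv_mul_cancel₀ hx.ne']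
  · simp only [← smul_neg, hom _ hinv]
    rw [← mul_max_of_nonneg _ _ hinv, ← mul_add, div_eq_inv_mul]

/-- For an asymmetric norm `f`, the map `f₁ x = f x + max (f x) (f (-x))` is an
asymmetric norm with positive index of symmetry; moreover, if `f` is not symmetric,
then the index of symmetry of `f₁` is `< 1`. -/
theorem new_asymm_norm_index_pos
    {X : Type*} [AddCommGroup X] [Module ℝ X] [Nontrivial X]
    (f : X → ℝ) (hf : IsAsymmNorm f) :
    IsAsymmNorm (fun x => f x + max (f x) (f (-x))) ∧
    0 < sInf ((fun x => f (-x) + max (f (-x)) (f x)) ''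
        {x | f x + max (f x) (f (-x)) = 1}) ∧
    ((∃ x : X, f x ≠ f (-x)) →
      sInf ((fun x => f (-x) + max (f (-x)) (f x)) ''
        {x | f x + max (f x) (f (-x)) = 1}) < 1) := by
  obtain ⟨nn, hom, tri, sep⟩ := id hf
  have hpos : ∀ x, x ≠ 0 → 0 < f x + max (f x) (f (-x)) := by
    intro x hx
    by_contra h
    have h1 := le_max_left (f x) (f (-x))
    have h2 := le_max_right (f x) (f (-x))
    have h3 := nn x
    have h4 := nn (-x)
    exact hx (sep x (by linarith) (by linarith))
  refine ⟨⟨fun x => ?_, fun c hc x => ?_, fun x y => ?_, fun x hx _ => ?_⟩, ?_, ?_⟩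
  · exact add_nonneg (nn x) (le_max_of_le_left (nn x))
  · simp only [← smul_neg, hom c hc]
    rw [← mul_max_of_nonneg _ _ hc, ← mul_add]
  · have h1 := tri x y
    have h2 := tri (-x) (-y)
    rw [← neg_add] at h2
    have h3 : max (f (x + y)) (f (-(x + y))) ≤ max (f x) (f (-x)) + max (f y) (f (-y)) :=
      max_le (h1.trans (add_le_add (le_max_left _ _) (le_max_left _ _)))
        (h2.trans (add_le_add (le_max_right _ _) (le_max_right _ _)))
    simp only
    linarith
  · by_contra h
    exact (hpos x h).ne' hx
  · obtain ⟨x, hx⟩ := exists_ne (0 : X)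
    refine lt_of_lt_of_le (by norm_num : (0 : ℝ) < 1 / 2)
      (le_csInf ⟨_, ratio_mem_image f hf x (hpos x hx)⟩ ?_)
    rintro _ ⟨y, hy, rfl⟩
    simp only [Set.mem_setOf_eq] at hy ⊢
    rw [max_comm (f (-y))]
    have h1 := le_max_left (f y) (f (-y))
    have h2 := nn (-y)
    linarith
  · have key : ∀ x, f (-x) < f x →
        sInf ((fun x => f (-x) + max (f (-x)) (f x)) ''
          {x | f x + max (f x) (f (-x)) = 1}) < 1 := by
      intro x hx
      have ht : 0 < f x + max (f x) (f (-x)) :=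
        add_pos_of_pos_of_nonneg ((nn _).trans_lt hx) (le_max_of_le_left (nn x))
      refine lt_of_le_of_lt (csInf_le ⟨0, ?_⟩ (ratio_mem_image f hf x ht)) ?_
      · rintro _ ⟨y, -, rfl⟩
        exact add_nonneg (nn _) (le_max_of_le_left (nn _))
      · rw [div_lt_one ht, max_comm (f (-x))]
        linarith
    rintro ⟨x, hx⟩
    rcases lt_or_gt_of_ne hx with h | h
    · exact key (-x) (by rwa [neg_neg])
    · exact key x h
end
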